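/- Let S ∈ ℝ^{PN×PN} be invertible and suppose (ŝ, v̂) ∈ ℝ^P × ℝ^{PN} satisfies v̂ = T(ŝ) S v̂ and F(ŝ, v̂) = 0, where the function s := Σ_{α∈A} s_α Λ_α ∈ W_A satisfies s_* := inf_{y∈Γ} s(y) > 0; set û_A := S v̂. Then Δ(ŝ) is invertible with ‖Δ(ŝ)⁻¹‖ ≤ s_*⁻¹, and with ψ_max := ‖R(ŝ, v̂) S⁻¹‖ (operator norm with respect to ‖·‖_{ℝ^P⊗ℝ^N_M}), where R(ŝ, v̂)ŵ := ŵ − T(Δ(ŝ)⁻¹ F^v(v̂, ŵ)) T(ŝ)⁻¹ v̂, the following holds: letting t̂ be the implicit function with t̂(0) = 0 and F(ŝ + t̂(ŵ), v̂ + ŵ) = 0 near 0, and Φ(û) := T(ŝ + t̂(S⁻¹û − v̂))⁻¹ S⁻¹ û, for every ε > 0 there exists δ > 0 such that ‖Φ(û) − û_A‖_{ℝ^P⊗ℝ^N_M} ≤ (ψ_max/s_* + ε) ‖û − û_A‖_{ℝ^P⊗ℝ^N_M} whenever ‖û − û_A‖_{ℝ^P⊗ℝ^N_M} < δ. -/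

import Mathlib

open Matrix MeasureTheory Filter

lemma bilin_bound {E V G : Type*} [NormedAddCommGroup E] [NormedSpace ℝ E] [FiniteDimensional ℝ E]
    [NormedAddCommGroup V] [NormedSpace ℝ V] [FiniteDimensional ℝ V]
    [NormedAddCommGroup G] [NormedSpace ℝ G]
    (B : V →ₗ[ℝ] E →ₗ[ℝ] G) : ∃ C : ℝ, 0 ≤ C ∧ ∀ x y, ‖B x y‖ ≤ C * ‖x‖ * ‖y‖ := by
  let B' : V →L[ℝ] E →L[ℝ] G := LinearMap.toContinuousLinearMap
    ((LinearMap.toContinuousLinearMap (𝕜 := ℝ) (E := E) (F' := G)).toLinearMap ∘ₗ B)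
  exact ⟨‖B'‖, ContinuousLinearMap.opNorm_nonneg _, fun x y => B'.le_opNorm₂ x y⟩

lemma lin_bound {E G : Type*} [NormedAddCommGroup E] [NormedSpace ℝ E] [FiniteDimensional ℝ E]
    [NormedAddCommGroup G] [NormedSpace ℝ G]
    (B : E →ₗ[ℝ] G) : ∃ C : ℝ, 0 ≤ C ∧ ∀ x, ‖B x‖ ≤ C * ‖x‖ := by
  let B' : E →L[ℝ] G := LinearMap.toContinuousLinearMap B
  exact ⟨‖B'‖, ContinuousLinearMap.opNorm_nonneg _, fun x => B'.le_opNorm x⟩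

lemma inj_bound {E G : Type*} [NormedAddCommGroup E] [NormedSpace ℝ E] [FiniteDimensional ℝ E]
    [NormedAddCommGroup G] [NormedSpace ℝ G]
    (B : E →ₗ[ℝ] G) (hB : ∀ x, B x = 0 → x = 0) : ∃ C : ℝ, 0 < C ∧ ∀ x, ‖x‖ ≤ C * ‖B x‖ := by
  obtain ⟨K, hK, h⟩ := B.exists_antilipschitzWith (LinearMap.ker_eq_bot'.2 hB)
  exact ⟨K, by exact_mod_cast hK, fun x => by simpa using h.le_mul_dist x 0⟩

lemma core {E V H : Type*} [NormedAddCommGroup E] [NormedSpace ℝ E] [FiniteDimensional ℝ E]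
    [NormedAddCommGroup V] [NormedSpace ℝ V] [FiniteDimensional ℝ V]
    [NormedAddCommGroup H] [NormedSpace ℝ H]
    (J : E →ₗ[ℝ] H) (hJ : ∀ x, J x = 0 → x = 0)
    (T : V →ₗ[ℝ] E →ₗ[ℝ] E) (D : V →ₗ[ℝ] V →ₗ[ℝ] V) (Q : E →ₗ[ℝ] E →ₗ[ℝ] V)
    (S : E ≃ₗ[ℝ] E) (s : V) (v uA : E) (huA : T s uA = v) (a : ℝ) (ha : 0 < a)
    (hco : ∀ u, a * ‖J u‖ ≤ ‖J (T s u)‖) (hD : ∀ t, D s t = 0 → t = 0)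
    (ψ : ℝ) (R : E → V) (hR : ∀ w, D s (R w) = Q v w)
    (hψ : ∀ w, ‖J (w - T (R w) uA)‖ ≤ ψ * ‖J (S w)‖)
    (t : E → V) (ht0 : t 0 = 0) (htc : ContinuousAt t 0)
    (ht : ∀ᶠ w in nhds (0 : E), D s (t w) + (1/2 : ℝ) • D (t w) (t w)
      = Q v w + (1/2 : ℝ) • Q w w)
    (e : E → E) (he : ∀ᶠ w in nhds (0 : E), T (s + t w) (e w + uA) = v + w)
    (ε : ℝ) (hε : 0 < ε) :
    ∀ᶠ w in nhds (0 : E), ‖J (e w)‖ ≤ (ψ / a + ε) * ‖J (S w)‖ := by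
  obtain ⟨CT, hCT, hT⟩ := bilin_bound T
  obtain ⟨CD, hCD, hDb⟩ := bilin_bound D
  obtain ⟨CQ, hCQ, hQ⟩ := bilin_bound Q
  obtain ⟨CJ, hCJ, hJb⟩ := lin_bound J
  obtain ⟨KJ, hKJ, hJi⟩ := inj_bound J hJ
  obtain ⟨KD, hKD, hDi⟩ := inj_bound (D s) hD
  obtain ⟨KS, hKS, hSi⟩ := inj_bound (J ∘ₗ S.toLinearMap) (fun x hx => by
    simpa using hJ _ hx)
  have tt : Tendsto (fun w => ‖t w‖) (nhds 0) (nhds 0) := by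
    have := htc.norm
    simpa [ContinuousAt, ht0] using this
  have tw : Tendsto (fun w : E => ‖w‖) (nhds 0) (nhds 0) := by
    simpa using (continuous_norm (E := E)).tendsto 0
  set η := ε * a / (1 + |ψ| / a + ε) with hη
  have hden : 0 < 1 + |ψ| / a + ε := by positivity
  have hηpos : 0 < η := by positivity
  have hηa : η < a := by
    rw [hη, div_lt_iff₀ hden]
    have : 0 ≤ |ψ| / a := by positivity
    nlinarith
  have hηψ : ψ + η ≤ (ψ / a + ε) * (a - η) := by
    have h1 : η * (1 + |ψ| / a + ε) = ε * a := by rw [hη]; field_simp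
    have h2 : ψ / a ≤ |ψ| / a := by gcongr; exact le_abs_self _
    have h3 : (ψ / a + ε) * (a - η) = ψ + ε * a - η * (ψ / a + ε) := by field_simp
    nlinarith
  -- linear bound for t
  set L := 2 * KD * (CQ * ‖v‖ + CQ) with hL
  have hL0 : 0 ≤ L := by positivity
  have e1 : ∀ᶠ w in nhds (0:E), KD * CD * ‖t w‖ < 1 := by
    have : Tendsto (fun w => KD * CD * ‖t w‖) (nhds 0) (nhds 0) := by
      simpa using tt.const_mul (KD * CD)
    exact this.eventually (gt_mem_nhds one_pos)
  have e2 : ∀ᶠ w in nhds (0:E), ‖w‖ < 1 := tw.eventually (gt_mem_nhds one_pos)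
  have e3 : ∀ᶠ w in nhds (0:E), CJ * CT * ‖t w‖ * KJ < η := by
    have : Tendsto (fun w => CJ * CT * ‖t w‖ * KJ) (nhds 0) (nhds 0) := by
      simpa using (tt.const_mul (CJ * CT)).mul_const KJ
    exact this.eventually (gt_mem_nhds hηpos)
  have e4 : ∀ᶠ w in nhds (0:E),
      CJ * CT * ‖uA‖ * KD * (CQ + CD * L ^ 2) * KS * ‖w‖ < η := by
    have : Tendsto (fun w : E => CJ * CT * ‖uA‖ * KD * (CQ + CD * L ^ 2) * KS * ‖w‖)
        (nhds 0) (nhds 0) := by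
      simpa using tw.const_mul (CJ * CT * ‖uA‖ * KD * (CQ + CD * L ^ 2) * KS)
    exact this.eventually (gt_mem_nhds hηpos)
  filter_upwards [ht, he, e1, e2, e3, e4] with w ht he e1 e2 e3 e4
  have hn : ‖(1/2 : ℝ)‖ = 1/2 := by norm_num
  have htL : ‖t w‖ ≤ L * ‖w‖ := by
    have h1 : D s (t w) = Q v w + (1/2 : ℝ) • Q w w - (1/2 : ℝ) • D (t w) (t w) := by
      rw [← ht]; abel
    have h2 : ‖D s (t w)‖ ≤ CQ * ‖v‖ * ‖w‖ + 1/2 * (CQ * ‖w‖ * ‖w‖)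
        + 1/2 * (CD * ‖t w‖ * ‖t w‖) := by
      rw [h1]
      refine (norm_sub_le _ _).trans (add_le_add ((norm_add_le _ _).trans
        (add_le_add (hQ _ _) ?_)) ?_) <;> rw [norm_smul, hn]
      · have := hQ w w; linarith
      · have := hDb (t w) (t w); linarith
    have h3 := hDi (t w)
    have h4 : KD * ‖D s (t w)‖ ≤ KD * (CQ * ‖v‖ * ‖w‖ + 1/2 * (CQ * ‖w‖ * ‖w‖)
        + 1/2 * (CD * ‖t w‖ * ‖t w‖)) := by gcongr
    have h5 : KD * CD * ‖t w‖ * ‖t w‖ ≤ 1 * ‖t w‖ := by gcongr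
    have h6 : KD * CQ * ‖w‖ * ‖w‖ ≤ KD * CQ * ‖w‖ * 1 := by gcongr
    have h7 : 0 ≤ KD * CQ * ‖w‖ := by positivity
    rw [hL]
    nlinarith
  have hr : ‖t w - R w‖ ≤ KD * ((CQ + CD * L ^ 2) * ‖w‖ * ‖w‖) := by
    refine (hDi _).trans ?_
    gcongr
    have h1 : D s (t w - R w) = (1/2 : ℝ) • Q w w - (1/2 : ℝ) • D (t w) (t w) := by
      rw [map_sub, hR, sub_eq_sub_iff_add_eq_add, ht]; abel
    rw [h1]
    refine (norm_sub_le _ _).trans ?_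
    rw [norm_smul, norm_smul, hn]
    have := hQ w w
    have h2 := hDb (t w) (t w)
    have h3 : CD * ‖t w‖ * ‖t w‖ ≤ CD * (L * ‖w‖) * (L * ‖w‖) := by gcongr
    have h4 := norm_nonneg (Q w w)
    have h5 := norm_nonneg (D (t w) (t w))
    nlinarith
  have hTe : T s (e w) = (w - T (R w) uA) - T (t w - R w) uA - T (t w) (e w) := by
    have : T s (e w) + T s uA + (T (t w) (e w) + T (t w) uA) = v + w := by
      rw [← he]; simp only [map_add, LinearMap.add_apply]; abel
    rw [huA] at this
    simp only [map_sub, LinearMap.sub_apply]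
    rw [eq_sub_iff_add_eq]
    have h2 : T s (e w) + T (t w) (e w) = (v + w) - v - T (t w) uA := by
      rw [← this]; abel
    rw [h2]; abel
  have hmain : a * ‖J (e w)‖ ≤ ψ * ‖J (S w)‖ + η * ‖J (S w)‖ + η * ‖J (e w)‖ := by
    refine (hco _).trans ?_
    rw [hTe, map_sub, map_sub]
    refine (norm_sub_le _ _).trans (add_le_add ((norm_sub_le _ _).trans
        (add_le_add (hψ _) ?_)) ?_)
    · calc ‖J (T (t w - R w) uA)‖ ≤ CJ * (CT * ‖t w - R w‖ * ‖uA‖) :=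
            (hJb _).trans (by gcongr; exact hT _ _)
        _ ≤ CJ * (CT * (KD * ((CQ + CD * L ^ 2) * ‖w‖ * ‖w‖)) * ‖uA‖) := by gcongr
        _ ≤ CJ * (CT * (KD * ((CQ + CD * L ^ 2) * ‖w‖ * (KS * ‖J (S w)‖))) * ‖uA‖) := by
            gcongr; exact hSi w
        _ = (CJ * CT * ‖uA‖ * KD * (CQ + CD * L ^ 2) * KS * ‖w‖) * ‖J (S w)‖ := by ring
        _ ≤ η * ‖J (S w)‖ := by gcongr
    · calc ‖J (T (t w) (e w))‖ ≤ CJ * (CT * ‖t w‖ * ‖e w‖) :=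
            (hJb _).trans (by gcongr; exact hT _ _)
        _ ≤ CJ * (CT * ‖t w‖ * (KJ * ‖J (e w)‖)) := by gcongr; exact hJi _
        _ = (CJ * CT * ‖t w‖ * KJ) * ‖J (e w)‖ := by ring
        _ ≤ η * ‖J (e w)‖ := by gcongr
  have h8 : (ψ + η) * ‖J (S w)‖ ≤ (ψ / a + ε) * (a - η) * ‖J (S w)‖ := by gcongr
  have h9 : (a - η) * ‖J (e w)‖ ≤ (a - η) * ((ψ / a + ε) * ‖J (S w)‖) := by nlinarith
  exact le_of_mul_le_mul_left h9 (by linarith)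

lemma coer {Γ : Type*} [MeasurableSpace Γ] (ν : Measure Γ) [IsProbabilityMeasure ν]
    {ι : Type*} [Fintype ι] [DecidableEq ι]
    (Λ : ι → Γ → ℝ)
    (hΛmeas : ∀ α, Measurable (Λ α))
    (hΛbdd : ∀ α, ∃ C : ℝ, ∀ᵐ y ∂ν, |Λ α y| ≤ C)
    (hortho : ∀ α β, (∫ y, Λ α y * Λ β y ∂ν) = if α = β then 1 else 0)
    (c : ι → ι → ι → ℝ)
    (hc : ∀ α β γ, c α β γ = ∫ y, Λ α y * Λ β y * Λ γ y ∂ν)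
    (sh : ι → ℝ) (sstar : ℝ) (hsstar : 0 < sstar)
    (hs_lb : ∀ y, sstar ≤ ∑ α, sh α * Λ α y) (x : ι → ℝ) :
    sstar ^ 2 * ∑ α, x α ^ 2 ≤ ∑ α, (∑ β, (∑ γ, c γ α β * sh γ) * x β) ^ 2 := by
  have hm : ∀ α, MemLp (Λ α) ⊤ ν := fun α => by
    obtain ⟨C, hC⟩ := hΛbdd α
    exact memLp_top_of_bound (hΛmeas α).aestronglyMeasurable C hC
  have i2 : ∀ α β, Integrable (fun y => Λ α y * Λ β y) ν := fun α β =>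
    ((hm β).mul (hm α) (r := ⊤)).integrable le_top
  have i3 : ∀ α β γ, Integrable (fun y => Λ α y * Λ β y * Λ γ y) ν := fun α β γ =>
    ((hm γ).mul ((hm β).mul (hm α) (r := ⊤)) (r := ⊤)).integrable le_top
  have q2 : ∀ y, (∑ α, x α * Λ α y) ^ 2 = ∑ α, ∑ β, (x α * x β) * (Λ α y * Λ β y) := by
    intro y
    rw [sq, Finset.sum_mul_sum]
    exact Finset.sum_congr rfl fun _ _ => Finset.sum_congr rfl fun _ _ => by ring
  have q3 : ∀ y, (∑ γ, sh γ * Λ γ y) * (∑ α, x α * Λ α y) ^ 2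
      = ∑ γ, ∑ α, ∑ β, (sh γ * x α * x β) * (Λ γ y * Λ α y * Λ β y) := by
    intro y
    rw [q2, Finset.sum_mul]
    refine Finset.sum_congr rfl fun _ _ => ?_
    rw [Finset.mul_sum]
    refine Finset.sum_congr rfl fun _ _ => ?_
    rw [Finset.mul_sum]
    exact Finset.sum_congr rfl fun _ _ => by ring
  have I2 : ∫ y, (∑ α, x α * Λ α y) ^ 2 ∂ν = ∑ α, x α ^ 2 := by
    simp_rw [q2]
    rw [integral_finsetSum _ fun α _ => integrable_finsetSum _ fun β _ => (i2 α β).const_mul _]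
    refine Finset.sum_congr rfl fun α _ => ?_
    rw [integral_finsetSum _ fun β _ => (i2 α β).const_mul _]
    simp [integral_const_mul, hortho, sq]
  have I3 : ∫ y, (∑ γ, sh γ * Λ γ y) * (∑ α, x α * Λ α y) ^ 2 ∂ν
      = ∑ α, x α * (∑ β, (∑ γ, c γ α β * sh γ) * x β) := by
    simp_rw [q3]
    rw [integral_finsetSum _ fun γ _ => integrable_finsetSum _ fun α _ =>
      integrable_finsetSum _ fun β _ => (i3 γ α β).const_mul _]
    simp_rw [Finset.mul_sum, Finset.sum_mul, Finset.mul_sum]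
    rw [Finset.sum_congr rfl fun α _ => Finset.sum_comm, Finset.sum_comm]
    refine Finset.sum_congr rfl fun γ _ => ?_
    rw [integral_finsetSum _ fun α _ => integrable_finsetSum _ fun β _ => (i3 γ α β).const_mul _]
    refine Finset.sum_congr rfl fun α _ => ?_
    rw [integral_finsetSum _ fun β _ => (i3 γ α β).const_mul _]
    refine Finset.sum_congr rfl fun β _ => ?_
    rw [integral_const_mul, hc]; ring
  have j2 : Integrable (fun y => (∑ α, x α * Λ α y) ^ 2) ν := by
    simp_rw [q2]
    exact integrable_finsetSum _ fun α _ => integrable_finsetSum _ fun β _ => (i2 α β).const_mul _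
  have j3 : Integrable (fun y => (∑ γ, sh γ * Λ γ y) * (∑ α, x α * Λ α y) ^ 2) ν := by
    simp_rw [q3]
    exact integrable_finsetSum _ fun γ _ => integrable_finsetSum _ fun α _ =>
      integrable_finsetSum _ fun β _ => (i3 γ α β).const_mul _
  have key : sstar * ∑ α, x α ^ 2 ≤ ∑ α, x α * (∑ β, (∑ γ, c γ α β * sh γ) * x β) := by
    rw [← I2, ← I3, ← integral_const_mul]
    refine integral_mono (j2.const_mul _) j3 fun y => ?_
    exact mul_le_mul_of_nonneg_right (hs_lb y) (sq_nonneg _)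
  have cs := Finset.sum_mul_sq_le_sq_mul_sq Finset.univ x
    (fun α => ∑ β, (∑ γ, c γ α β * sh γ) * x β)
  have hX : 0 ≤ ∑ α, x α ^ 2 := Finset.sum_nonneg fun _ _ => sq_nonneg _
  have hY : 0 ≤ ∑ α, (∑ β, (∑ γ, c γ α β * sh γ) * x β) ^ 2 :=
    Finset.sum_nonneg fun _ _ => sq_nonneg _
  rcases hX.eq_or_lt with h0 | h0
  · rw [← h0]; simpa using hY
  · have h1 : (sstar * ∑ α, x α ^ 2) ^ 2 ≤
        (∑ α, x α * (∑ β, (∑ γ, c γ α β * sh γ) * x β)) ^ 2 := by gcongr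
    have h2 := h1.trans cs
    refine le_of_mul_le_mul_left (a := ∑ α, x α ^ 2) ?_ h0
    nlinarith

open scoped MatrixOrder in
lemma factor {N : ℕ} (M : Matrix (Fin N) (Fin N) ℝ) (hMsymm : Mᵀ = M)
    (hMpos : ∀ z : Fin N → ℝ, z ≠ 0 → 0 < z ⬝ᵥ (M *ᵥ z)) :
    ∃ B : Matrix (Fin N) (Fin N) ℝ, ∀ z, z ⬝ᵥ (M *ᵥ z) = ∑ i, ((B *ᵥ z) i) ^ 2 := by
  have h : M.PosDef := PosDef.of_dotProduct_mulVec_pos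
    (by rw [Matrix.IsHermitian, conjTranspose_eq_transpose_of_trivial, hMsymm])
    (fun x hx => by simpa using hMpos x hx)
  obtain ⟨B, hB⟩ := CStarAlgebra.nonneg_iff_eq_star_mul_self.1
    (Matrix.nonneg_iff_posSemidef.2 h.posSemidef)
  refine ⟨B, fun z => ?_⟩
  rw [hB, star_eq_conjTranspose, conjTranspose_eq_transpose_of_trivial, ← mulVec_mulVec,
    dotProduct_mulVec, vecMul_transpose]
  simp [dotProduct, sq]

/-- Corollary 5.9 of Hakula–Laaksonen: for a fixed point of the spectral inverse
iteration with `s(y) ≥ s_* > 0` on `Γ`, the matrix `Δ(ŝ)` is invertible with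
`‖Δ(ŝ)⁻¹‖ ≤ s_*⁻¹`, and one step of the iteration contracts the error near the fixed
point with asymptotic factor `ψ_max / s_*`. -/
theorem stmt14
    {Γ : Type*} [MeasurableSpace Γ] (ν : Measure Γ) [IsProbabilityMeasure ν]
    {ι : Type*} [Fintype ι] [DecidableEq ι]
    (Λ : ι → Γ → ℝ)
    (hΛmeas : ∀ α, Measurable (Λ α))
    (hΛbdd : ∀ α, ∃ C : ℝ, ∀ᵐ y ∂ν, |Λ α y| ≤ C)
    (hortho : ∀ α β, (∫ y, Λ α y * Λ β y ∂ν) = if α = β then 1 else 0)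
    (c : ι → ι → ι → ℝ)
    (hc : ∀ α β γ, c α β γ = ∫ y, Λ α y * Λ β y * Λ γ y ∂ν)
    (N : ℕ)
    (M : Matrix (Fin N) (Fin N) ℝ)
    (hMsymm : Mᵀ = M)
    (hMpos : ∀ z : Fin N → ℝ, z ≠ 0 → 0 < z ⬝ᵥ (M *ᵥ z))
    (F : (ι → ℝ) → (ι → Fin N → ℝ) → ι → ℝ)
    (hF : F = fun sh vh α => (∑ β, ∑ γ, c α β γ * sh β * sh γ) -
        ∑ β, ∑ γ, c α β γ * (vh β ⬝ᵥ (M *ᵥ vh γ)))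
    (Fv : (ι → Fin N → ℝ) → (ι → Fin N → ℝ) → ι → ℝ)
    (hFv : Fv = fun vh wh α => ∑ β, ∑ γ, c α β γ * (vh β ⬝ᵥ (M *ᵥ wh γ)))
    (Δ : (ι → ℝ) → Matrix ι ι ℝ)
    (hΔ : Δ = fun sh => Matrix.of fun α β => ∑ γ, c γ α β * sh γ)
    (T : (ι → ℝ) → (ι → Fin N → ℝ) → ι → Fin N → ℝ)
    (hT : T = fun sh u α i => ∑ β, Δ sh α β * u β i)
    (MnormPN : (ι → Fin N → ℝ) → ℝ)
    (hMnormPN : MnormPN = fun u => Real.sqrt (∑ α, u α ⬝ᵥ (M *ᵥ u α)))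
    (S : (ι → Fin N → ℝ) ≃ₗ[ℝ] (ι → Fin N → ℝ))
    (sh : ι → ℝ) (vh : ι → Fin N → ℝ)
    (hfix : vh = T sh (S vh))
    (hFzero : F sh vh = 0)
    (sstar : ℝ) (hsstar : 0 < sstar)
    (hs_lb : ∀ y, sstar ≤ ∑ α, sh α * Λ α y)
    (uA : ι → Fin N → ℝ) (huA : uA = S vh)
    (Rop : (ι → Fin N → ℝ) → ι → Fin N → ℝ)
    (hRop : Rop = fun w =>
      w - T ((Δ sh)⁻¹ *ᵥ Fv vh w) (fun α i => ∑ β, (Δ sh)⁻¹ α β * vh β i))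
    (psimax : ℝ)
    (hpsimax : ∀ w : ι → Fin N → ℝ, MnormPN (Rop (S.symm w)) ≤ psimax * MnormPN w) :
    IsUnit (Δ sh) ∧
    (∀ cc : ι → ℝ,
      Real.sqrt (((Δ sh)⁻¹ *ᵥ cc) ⬝ᵥ ((Δ sh)⁻¹ *ᵥ cc)) ≤ sstar⁻¹ * Real.sqrt (cc ⬝ᵥ cc)) ∧
    ∀ t : (ι → Fin N → ℝ) → ι → ℝ,
      t 0 = 0 → ContinuousAt t 0 →
      (∀ᶠ w in nhds (0 : ι → Fin N → ℝ), F (sh + t w) (vh + w) = 0) →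
      ∀ ε > (0 : ℝ), ∃ δ > (0 : ℝ), ∀ u : ι → Fin N → ℝ,
        MnormPN (u - uA) < δ →
        MnormPN ((fun α i =>
            ∑ β, (Δ (sh + t (S.symm u - vh)))⁻¹ α β * (S.symm u) β i) - uA)
          ≤ (psimax / sstar + ε) * MnormPN (u - uA) := by
  have hcoer := coer ν Λ hΛmeas hΛbdd hortho c hc sh sstar hsstar hs_lb
  have c12 : ∀ α β γ, c α β γ = c β α γ := fun α β γ => by
    rw [hc, hc]; congr 1; ext y; ring
  have c23 : ∀ α β γ, c α β γ = c α γ β := fun α β γ => by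
    rw [hc, hc]; congr 1; ext y; ring
  have hΔv : ∀ (s x : ι → ℝ) α, (Δ s *ᵥ x) α = ∑ β, (∑ γ, c γ α β * s γ) * x β := by
    intro s x α; simp [hΔ, mulVec, dotProduct]
  have hcoer' : ∀ x : ι → ℝ, sstar ^ 2 * ∑ α, x α ^ 2 ≤ ∑ α, ((Δ sh *ᵥ x) α) ^ 2 := by
    intro x; simp_rw [hΔv]; exact hcoer x
  have hinj : ∀ x : ι → ℝ, Δ sh *ᵥ x = 0 → x = 0 := by
    intro x hx
    have h := hcoer' x
    rw [hx] at h
    simp only [Pi.zero_apply, ne_eq, OfNat.ofNat_ne_zero, not_false_eq_true, zero_pow,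
      Finset.sum_const_zero] at h
    have h1 : ∑ α, x α ^ 2 ≤ 0 := by
      by_contra hh
      push Not at hh
      have : 0 < sstar ^ 2 * ∑ α, x α ^ 2 := by positivity
      linarith
    have h2 := (Finset.sum_eq_zero_iff_of_nonneg (fun α _ => sq_nonneg (x α))).1
      (le_antisymm h1 (Finset.sum_nonneg fun _ _ => sq_nonneg _))
    ext α
    simpa using h2 α (Finset.mem_univ _)
  have hunit : IsUnit (Δ sh) := by
    rw [← Matrix.mulVec_injective_iff_isUnit]
    intro x y hxy
    have := hinj (x - y) (by rw [mulVec_sub]; exact sub_eq_zero.2 hxy)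
    exact sub_eq_zero.1 this
  have hdet : IsUnit (Δ sh).det := (Matrix.isUnit_iff_isUnit_det _).1 hunit
  refine ⟨hunit, ?_, ?_⟩
  · intro cc
    have h := hcoer' ((Δ sh)⁻¹ *ᵥ cc)
    rw [mulVec_mulVec, Matrix.mul_nonsing_inv _ hdet, one_mulVec] at h
    rw [inv_mul_eq_div, le_div_iff₀ hsstar, mul_comm]
    apply Real.le_sqrt_of_sq_le
    rw [mul_pow, Real.sq_sqrt (by
      simp only [dotProduct]; exact Finset.sum_nonneg fun _ _ => mul_self_nonneg _)]
    simpa [dotProduct, sq] using h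
  intro t ht0 htc ht ε hε
  obtain ⟨B, hB⟩ := factor M hMsymm hMpos
  let J : (ι → Fin N → ℝ) →ₗ[ℝ] EuclideanSpace ℝ (ι × Fin N) :=
    { toFun := fun u => WithLp.toLp 2 fun p => (B *ᵥ u p.1) p.2
      map_add' := fun u v => by ext p; simp [mulVec_add]
      map_smul' := fun r u => by ext p; simp [mulVec_smul] }
  have hJapp : ∀ u p, J u p = (B *ᵥ u p.1) p.2 := fun _ _ => rfl
  have hJn : ∀ u, MnormPN u = ‖J u‖ := by
    intro u
    rw [hMnormPN, EuclideanSpace.norm_eq]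
    simp only [hB, hJapp, Real.norm_eq_abs, sq_abs, Fintype.sum_prod_type]
  have hJ0 : ∀ u, J u = 0 → u = 0 := by
    intro u hu
    ext1 α
    by_contra hα
    have h1 := hMpos (u α) hα
    rw [hB] at h1
    have h2 : ∀ i, (B *ᵥ u α) i = 0 := fun i => by
      rw [← hJapp u (α, i), hu]; rfl
    simp [h2] at h1
  have hΔadd : ∀ s s', Δ (s + s') = Δ s + Δ s' := fun s s' => by
    ext α β; simp [hΔ, mul_add, Finset.sum_add_distrib]
  have hΔsmul : ∀ (r : ℝ) s, Δ (r • s) = r • Δ s := fun r s => by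
    ext α β; simp only [hΔ, of_apply, Pi.smul_apply, smul_eq_mul, Matrix.smul_apply,
      Finset.mul_sum]
    exact Finset.sum_congr rfl fun _ _ => by ring
  have hTcol : ∀ s u α i, T s u α i = (Δ s *ᵥ fun β => u β i) α := fun s u α i => by
    rw [hT]; rfl
  let TL : (ι → ℝ) →ₗ[ℝ] (ι → Fin N → ℝ) →ₗ[ℝ] (ι → Fin N → ℝ) := LinearMap.mk₂ ℝ T
    (fun s s' u => by ext α i; simp [hTcol, hΔadd, add_mulVec])
    (fun r s u => by ext α i; simp [hTcol, hΔsmul, smul_mulVec])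
    (fun s u u' => by
      ext α i
      simp only [hTcol, Pi.add_apply]
      rw [← Pi.add_apply, ← mulVec_add]; rfl)
    (fun r s u => by
      ext α i
      simp only [hTcol, Pi.smul_apply]
      rw [← Pi.smul_apply, ← mulVec_smul]; rfl)
  let DL : (ι → ℝ) →ₗ[ℝ] (ι → ℝ) →ₗ[ℝ] (ι → ℝ) := LinearMap.mk₂ ℝ (fun s x => Δ s *ᵥ x)
    (fun s s' u => by simp [hΔadd, add_mulVec])
    (fun r s u => by simp [hΔsmul, smul_mulVec])
    (fun s u u' => by simp [mulVec_add])
    (fun r s u => by simp [mulVec_smul])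
  let QL : (ι → Fin N → ℝ) →ₗ[ℝ] (ι → Fin N → ℝ) →ₗ[ℝ] (ι → ℝ) := LinearMap.mk₂ ℝ Fv
    (fun s s' u => by
      ext α; simp [hFv, add_dotProduct, mul_add, Finset.sum_add_distrib])
    (fun r s u => by
      ext α; simp [hFv, smul_dotProduct, Finset.mul_sum, mul_left_comm])
    (fun s s' u => by
      ext α; simp [hFv, mulVec_add, dotProduct_add, mul_add, Finset.sum_add_distrib])
    (fun r s u => by
      ext α; simp [hFv, mulVec_smul, dotProduct_smul, Finset.mul_sum, mul_left_comm])
  have hTL : ∀ s u, TL s u = T s u := fun _ _ => rfl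
  have hDL : ∀ s u, DL s u = Δ s *ᵥ u := fun _ _ => rfl
  have hQL : ∀ s u, QL s u = Fv s u := fun _ _ => rfl
  have hTs : TL sh uA = vh := by rw [hTL, huA, ← hfix]
  have hinvT : ∀ s (z u : ι → Fin N → ℝ), IsUnit (Δ s).det →
      T s (fun α i => ∑ β, (Δ s)⁻¹ α β * z β i) = z := by
    intro s z u hd
    ext α i
    rw [hTcol]
    change (Δ s *ᵥ ((Δ s)⁻¹ *ᵥ fun β => z β i)) α = _
    rw [mulVec_mulVec, Matrix.mul_nonsing_inv _ hd, one_mulVec]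
  have hTinvT : (fun α i => ∑ β, (Δ sh)⁻¹ α β * vh β i) = uA := by
    ext α i
    rw [← hTs, hTL]
    simp only [hTcol]
    change ((Δ sh)⁻¹ *ᵥ (Δ sh *ᵥ fun β => uA β i)) α = _
    rw [mulVec_mulVec, Matrix.nonsing_inv_mul _ hdet, one_mulVec]
  have hco : ∀ u, sstar * ‖J u‖ ≤ ‖J (TL sh u)‖ := by
    intro u
    rw [EuclideanSpace.norm_eq (J (TL sh u))]
    apply Real.le_sqrt_of_sq_le
    rw [mul_pow, EuclideanSpace.norm_sq_eq]
    simp only [hJapp, Real.norm_eq_abs, sq_abs, Fintype.sum_prod_type_right, Finset.mul_sum]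
    refine Finset.sum_le_sum fun i _ => ?_
    have h := hcoer' (fun α => (B *ᵥ u α) i)
    rw [Finset.mul_sum] at h
    refine h.trans (le_of_eq (Finset.sum_congr rfl fun α _ => ?_))
    congr 1
    simp only [hTL, mulVec, dotProduct, hT, Finset.mul_sum]
    rw [Finset.sum_comm]
    refine Finset.sum_congr rfl fun _ _ => Finset.sum_congr rfl fun _ _ => ?_
    ring
  have hR : ∀ w, DL sh ((Δ sh)⁻¹ *ᵥ Fv vh w) = QL vh w := by
    intro w
    rw [hDL, mulVec_mulVec, Matrix.mul_nonsing_inv _ hdet, one_mulVec, hQL]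
  have hψ : ∀ w, ‖J (w - TL ((Δ sh)⁻¹ *ᵥ Fv vh w) uA)‖ ≤ psimax * ‖J (S w)‖ := by
    intro w
    have h := hpsimax (S w)
    rw [hJn, hJn, hRop] at h
    simp only [LinearEquiv.symm_apply_apply, hTinvT] at h
    exact h
  have hFe : ∀ s v, F s v = DL s s - QL v v := by
    intro s v
    ext α
    rw [Pi.sub_apply, hDL, hQL, hΔv, hF, hFv]
    dsimp only
    congr 1
    simp only [Finset.sum_mul]
    refine Finset.sum_congr rfl fun β _ => Finset.sum_congr rfl fun γ _ => ?_
    rw [c12 γ α β, c23 α γ β]; ring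
  have hDsymm : ∀ s s', DL s s' = DL s' s := by
    intro s s'
    ext α
    rw [hDL, hDL, hΔv, hΔv]
    simp only [Finset.sum_mul]
    rw [Finset.sum_comm]
    refine Finset.sum_congr rfl fun β _ => Finset.sum_congr rfl fun γ _ => ?_
    rw [c12 β α γ, c23 α β γ, c12 α γ β]; ring
  have hMs : ∀ x y : Fin N → ℝ, x ⬝ᵥ (M *ᵥ y) = y ⬝ᵥ (M *ᵥ x) := by
    intro x y
    rw [dotProduct_mulVec, ← mulVec_transpose, hMsymm, dotProduct_comm]
  have hQsymm : ∀ s s', QL s s' = QL s' s := by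
    intro s s'
    ext α
    rw [hQL, hQL, hFv]
    simp only
    rw [Finset.sum_comm]
    refine Finset.sum_congr rfl fun β _ => Finset.sum_congr rfl fun γ _ => ?_
    rw [c23, hMs]
  have hteq : ∀ᶠ w in nhds (0 : ι → Fin N → ℝ), DL sh (t w) + (1/2 : ℝ) • DL (t w) (t w)
      = QL vh w + (1/2 : ℝ) • QL w w := by
    filter_upwards [ht] with w hw
    rw [hFe] at hw
    have h0 := hFzero
    rw [hFe] at h0
    simp only [map_add, LinearMap.add_apply] at hw
    rw [hDsymm (t w) sh, hQsymm w vh] at hw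
    ext α
    have h1 := congrFun hw α
    have h2 := congrFun h0 α
    simp only [Pi.add_apply, Pi.sub_apply, Pi.zero_apply, Pi.smul_apply, smul_eq_mul] at h1 h2 ⊢
    linarith
  have hdet' : ∀ᶠ w in nhds (0 : ι → Fin N → ℝ), IsUnit (Δ (sh + t w)).det := by
    have hc1 : Continuous fun s : ι → ℝ => (Δ s).det := by
      apply Continuous.matrix_det
      rw [hΔ]
      fun_prop
    have hc2 : ContinuousAt (fun w => (Δ (sh + t w)).det) 0 :=
      hc1.continuousAt.comp (continuousAt_const.add htc)
    have h3 : (Δ (sh + t 0)).det ≠ 0 := by rw [ht0, add_zero]; exact hdet.ne_zero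
    filter_upwards [hc2.eventually_ne h3] with w hw using isUnit_iff_ne_zero.2 hw
  have hmain := core J hJ0 TL DL QL S sh vh uA hTs sstar hsstar hco hinj psimax
    (fun w => (Δ sh)⁻¹ *ᵥ Fv vh w) hR hψ t ht0 htc hteq
    (fun w => (fun α i => ∑ β, (Δ (sh + t w))⁻¹ α β * (vh + w) β i) - uA)
    (by
      filter_upwards [hdet'] with w hw
      rw [sub_add_cancel, hTL]
      exact hinvT _ _ 0 hw) ε hε
  obtain ⟨K, hK, hSi⟩ := inj_bound (J ∘ₗ S.toLinearMap) (fun x hx => by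
    simpa using hJ0 _ hx)
  obtain ⟨ρ, hρ, hball⟩ := Metric.eventually_nhds_iff.1 hmain
  refine ⟨ρ / K, by positivity, fun u hu => ?_⟩
  have hSw : S (S.symm u - vh) = u - uA := by simp [huA]
  have h1 : dist (S.symm u - vh) 0 < ρ := by
    rw [dist_zero_right]
    refine (hSi _).trans_lt ?_
    rw [hJn, lt_div_iff₀ hK] at hu
    simp only [LinearMap.comp_apply, LinearEquiv.coe_coe, hSw]
    linarith
  have h2 := hball h1
  rw [hSw, add_sub_cancel] at h2
  rw [hJn, hJn]
  exact h2
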